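/- For the uncertain shift semigroup (S(t)f)(x) := sup_{|y|≤t} f(x+y) on BUC(ℝ): for every f ∈ BUC(ℝ) and t ≥ 0, the function S(t)f is bounded uniformly continuous with ‖S(t)f‖_∞ ≤ ‖f‖_∞, S(t)f has the same modulus of continuity as f, each S(t) is sublinear and monotone, and ‖S(t)f − f‖_∞ → 0 as t ↓ 0. -/

import Mathlib

/-! For bounded `f` and `t ≥ 0` the set `{f (x + y) : |y| ≤ t}` is nonempty and bounded, so
`US t f x` is characterised by `US_le` and `le_US` as its least upper bound. Every claim then
follows by comparing the translates `f (x + y)` for each fixed `y`: a modulus of continuity is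
invariant under translation, hence survives the supremum, and since the translates range over
`|y| ≤ s`, the difference `US s f x - f x` lies between `0` and the oscillation of `f` at scale `s`,
which uniform continuity makes small. -/

/-- The uncertain shift semigroup on `BUC(ℝ)`: `(S t f) x = sup_{|y| ≤ t} f (x + y)`. -/
noncomputable def US (t : ℝ) (f : ℝ → ℝ) (x : ℝ) : ℝ :=
  sSup {z : ℝ | ∃ y : ℝ, |y| ≤ t ∧ z = f (x + y)}

/-- The supremum is over a nonempty set when `0 ≤ t` (take `y = 0`), so an upper bound for `f` on
`[x - t, x + t]` bounds `US t f x`. -/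
lemma US_le {t : ℝ} (ht : 0 ≤ t) {f : ℝ → ℝ} {x M : ℝ}
    (h : ∀ y, |y| ≤ t → f (x + y) ≤ M) : US t f x ≤ M := by
  refine csSup_le ⟨f (x + 0), 0, by simpa using ht, rfl⟩ ?_
  rintro z ⟨y, hy, rfl⟩
  exact h y hy

/-- Boundedness of `f` makes the supremum genuine, hence an upper bound for the translates. -/
lemma le_US {t : ℝ} {f : ℝ → ℝ} {C : ℝ} (hb : ∀ x, |f x| ≤ C) (x : ℝ) {y : ℝ} (hy : |y| ≤ t) :
    f (x + y) ≤ US t f x := by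
  refine le_csSup ⟨C, ?_⟩ ⟨y, hy, rfl⟩
  rintro z ⟨w, -, rfl⟩
  exact (abs_le.1 (hb _)).2

lemma self_le_US {t : ℝ} (ht : 0 ≤ t) {f : ℝ → ℝ} {C : ℝ} (hb : ∀ x, |f x| ≤ C) (x : ℝ) :
    f x ≤ US t f x := by
  have h := le_US hb x (t := t) (y := 0) (by simpa using ht)
  rwa [add_zero] at h

/-- Basic properties of the uncertain shift semigroup: `S(t)f` is bounded by the bound of `f`,
has the same modulus of continuity as `f`, `S(t)` is sublinear and monotone, and
`‖S(t)f - f‖_∞ → 0` as `t ↓ 0`. -/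
theorem stmt7 (f : ℝ → ℝ) (C : ℝ) (hb : ∀ x, |f x| ≤ C) (hu : UniformContinuous f)
    (t : ℝ) (ht : 0 ≤ t) :
    (∀ x, |US t f x| ≤ C) ∧
    (∀ ε δ : ℝ, (∀ a b : ℝ, |a - b| ≤ δ → |f a - f b| ≤ ε) →
      ∀ a b : ℝ, |a - b| ≤ δ → |US t f a - US t f b| ≤ ε) ∧
    (∀ g : ℝ → ℝ, (∃ D, ∀ x, |g x| ≤ D) →
      ∀ x, US t (f + g) x ≤ US t f x + US t g x) ∧
    (∀ l : ℝ, 0 < l → ∀ x, US t (l • f) x = l * US t f x) ∧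
    (∀ g : ℝ → ℝ, (∃ D, ∀ x, |g x| ≤ D) → (∀ x, f x ≤ g x) →
      ∀ x, US t f x ≤ US t g x) ∧
    (∀ ε : ℝ, 0 < ε → ∃ δ > 0, ∀ s : ℝ, 0 ≤ s → s ≤ δ → ∀ x, |US s f x - f x| ≤ ε) := by
  -- One half of the modulus estimate; the other follows by exchanging the two points.
  have key : ∀ ε a b : ℝ, (∀ y, |f (a + y) - f (b + y)| ≤ ε) → US t f a ≤ US t f b + ε := by
    intro ε a b h
    refine US_le ht fun y hy => ?_
    have h1 := (abs_le.1 (h y)).2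
    have h2 := le_US hb b hy
    linarith
  refine ⟨fun x => abs_le.2 ⟨?_, US_le ht fun y _ => (abs_le.1 (hb _)).2⟩, ?_, ?_, ?_, ?_, ?_⟩
  · exact (abs_le.1 (hb x)).1.trans (self_le_US ht hb x)
  · intro ε δ h a b hab
    have h1 := key ε a b fun y => h _ _ (by rwa [add_sub_add_right_eq_sub])
    have h2 := key ε b a fun y => h _ _ (by rwa [add_sub_add_right_eq_sub, abs_sub_comm])
    exact abs_le.2 ⟨by linarith, by linarith⟩
  · rintro g ⟨D, hD⟩ x
    exact US_le ht fun y hy => add_le_add (le_US hb x hy) (le_US hD x hy)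
  · intro l hl x
    have hbl : ∀ z, |(l • f) z| ≤ l * C := fun z => by
      rw [Pi.smul_apply, smul_eq_mul, abs_mul, abs_of_pos hl]
      exact mul_le_mul_of_nonneg_left (hb z) hl.le
    refine le_antisymm (US_le ht fun y hy => ?_) ?_
    · exact mul_le_mul_of_nonneg_left (le_US hb x hy) hl.le
    · rw [← le_div_iff₀' hl]
      refine US_le ht fun y hy => ?_
      rw [le_div_iff₀' hl]
      exact le_US hbl x hy
  · rintro g ⟨D, hD⟩ hfg x
    exact US_le ht fun y hy => (hfg _).trans (le_US hD x hy)
  · intro ε hε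
    obtain ⟨δ, hδ, h⟩ := Metric.uniformContinuous_iff.1 hu ε hε
    -- The radius is halved because the modulus condition is strict while `s ≤ δ` is not.
    refine ⟨δ / 2, half_pos hδ, fun s hs hsδ x => ?_⟩
    rw [abs_of_nonneg (sub_nonneg.2 (self_le_US hs hb x)), sub_le_iff_le_add]
    refine US_le hs fun y hy => ?_
    have h1 : dist (f (x + y)) (f x) < ε := h (by
      rw [Real.dist_eq, add_sub_cancel_left]
      linarith)
    rw [Real.dist_eq] at h1
    have h2 := (abs_lt.1 h1).2
    linarith
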